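/- arXiv:1503.04717 — 3 statements merged into one kernel-verified Lean document; each statement's English description precedes it below -/
import Mathlib

section
/- Let n ≥ 1 be an integer, let P ⊆ [0,1]^n be a nonempty compact convex down-monotone set such that for each coordinate i ∈ {1,…,n} there exists x ∈ P with x_i = 1. Let 0 < ε ≤ 1/2 and set γ = ε/(1−ε). Let S = {0} ∪ {⌊(1 + γ/2)^ℓ⌋ : ℓ = 0, 1, …, ⌊log_{1+γ/2}(5n/γ)⌋}, and let Q = {x ∈ ℝ^n : 0 ≤ x ≤ 1, and c̃·x ≤ max{c̃·y : y ∈ P} for every c̃ ∈ ℝ^n with c̃_i ∈ S for all i}. Then Q is an ε-approximated formulation of P: P ⊆ Q and for every c ∈ ℝ^n, max{c·x : x ∈ P} ≥ (1−ε)·max{c·x : x ∈ Q}. -/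
noncomputable section

/-- Dot product on `ℝ^n`. -/
def dot {n : ℕ} (c x : Fin n → ℝ) : ℝ := ∑ i, c i * x i

/-- The coefficient set `S = {0} ∪ {⌊(1 + γ/2)^ℓ⌋ : ℓ = 0, 1, …, ⌊log_{1+γ/2}(5n/γ)⌋}`. -/
def coefSet (n : ℕ) (γ : ℝ) : Set ℝ :=
  insert 0 {v : ℝ | ∃ ℓ : ℕ, ℓ ≤ ⌊Real.logb (1 + γ / 2) (5 * n / γ)⌋₊ ∧
    v = ((⌊(1 + γ / 2) ^ ℓ⌋ : ℤ) : ℝ)}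

/-- The polytope `Q` cut out by the box `[0,1]^n` and all inequalities
`c̃·x ≤ max {c̃·y : y ∈ P}` whose coefficients lie in `coefSet n γ`. -/
def approxQ (n : ℕ) (γ : ℝ) (P : Set (Fin n → ℝ)) : Set (Fin n → ℝ) :=
  {x | (∀ i, 0 ≤ x i ∧ x i ≤ 1) ∧
    ∀ ct : Fin n → ℝ, (∀ i, ct i ∈ coefSet n γ) →
      dot ct x ≤ sSup ((fun y => dot ct y) '' P)}

lemma key_aux (n : ℕ) (hn : 1 ≤ n) (γ : ℝ) (h0 : 0 < γ) (h1 : γ ≤ 1) :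
    ∃ L : ℕ, L ≤ ⌊Real.logb (1 + γ / 2) (5 * n / γ)⌋₊ ∧
      (1 + γ / 2) * n ≤ γ / 2 * (1 + γ / 2) ^ L := by
  have hn' : (1 : ℝ) ≤ n := by exact_mod_cast hn
  have hx : 1 ≤ 5 * (n : ℝ) / γ := by
    rw [le_div_iff₀ h0]; linarith
  obtain ⟨L, hL1, hL2⟩ := exists_nat_pow_near hx (show (1 : ℝ) < 1 + γ / 2 by linarith)
  refine ⟨L, ?_, ?_⟩
  · apply Nat.le_floor
    rw [Real.le_logb_iff_rpow_le (by linarith) (by linarith), Real.rpow_natCast]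
    exact hL1
  · rw [div_lt_iff₀ h0, pow_succ] at hL2
    have hq : (1 + γ / 2) * (1 + γ / 2) ≤ 5 / 2 := by nlinarith
    have hqp : 0 < 1 + γ / 2 := by linarith
    have : (1 + γ / 2) * ((1 + γ / 2) * n) ≤ (1 + γ / 2) * (γ / 2 * (1 + γ / 2) ^ L) := by
      nlinarith
    exact le_of_mul_le_mul_left this hqp

lemma bdd_aux {n : ℕ} (c : Fin n → ℝ) (P : Set (Fin n → ℝ)) (hPc : IsCompact P) :
    BddAbove ((fun x => dot c x) '' P) := by
  apply (hPc.image _).bddAbove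
  unfold dot
  fun_prop

lemma key_round {n : ℕ} (hn : 1 ≤ n)
    (P : Set (Fin n → ℝ)) (hPne : P.Nonempty)
    (hPbox : ∀ x ∈ P, ∀ i, 0 ≤ x i ∧ x i ≤ 1)
    (hfull : ∀ i, ∃ x ∈ P, x i = 1) (γ : ℝ) (h0 : 0 < γ)
    (L : ℕ) (hL : L ≤ ⌊Real.logb (1 + γ / 2) (5 * n / γ)⌋₊)
    (hL2 : (1 + γ / 2) * n ≤ γ / 2 * (1 + γ / 2) ^ L)
    (c : Fin n → ℝ) (hc0 : ∀ i, 0 ≤ c i) (hcL : ∀ i, c i ≤ (1 + γ / 2) ^ L)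
    (i₀ : Fin n) (hi₀ : c i₀ = (1 + γ / 2) ^ L) (M : ℝ) (hM : ∀ y ∈ P, dot c y ≤ M)
    (x : Fin n → ℝ) (hx : x ∈ approxQ n γ P) : dot c x ≤ (1 + γ) * M := by
  have hq1 : 1 < 1 + γ / 2 := by linarith
  have hKM : (1 + γ / 2) ^ L ≤ M := by
    obtain ⟨y, hy, hy1⟩ := hfull i₀
    refine le_trans ?_ (hM y hy)
    have := Finset.single_le_sum (f := fun i => c i * y i)
      (fun i _ => mul_nonneg (hc0 i) (hPbox y hy i).1) (Finset.mem_univ i₀)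
    simp only [hy1, hi₀, mul_one] at this
    exact this
  have hround : ∀ i, ∃ v ∈ coefSet n γ, v ≤ c i ∧ c i ≤ (1 + γ / 2) * (v + 1) := by
    intro i
    rcases lt_or_ge (c i) 1 with h | h
    · exact ⟨0, Set.mem_insert _ _, hc0 i, by linarith⟩
    · obtain ⟨l, hl1, hl2⟩ := exists_nat_pow_near h hq1
      refine ⟨_, Set.mem_insert_of_mem _ ⟨l, ?_, rfl⟩, (Int.floor_le _).trans hl1, ?_⟩
      · refine le_trans ?_ hL
        exact (pow_le_pow_iff_right₀ hq1).1 (hl1.trans (hcL i))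
      · rw [pow_succ] at hl2
        have := Int.lt_floor_add_one ((1 + γ / 2) ^ l)
        nlinarith
  choose ct hct hle hge using hround
  have hQ := hx.2 ct hct
  have hsup : sSup ((fun y => dot ct y) '' P) ≤ M := by
    apply csSup_le (hPne.image _)
    rintro _ ⟨y, hy, rfl⟩
    refine le_trans ?_ (hM y hy)
    exact Finset.sum_le_sum fun i _ => mul_le_mul_of_nonneg_right (hle i) (hPbox y hy i).1
  have hdot : dot c x ≤ (1 + γ / 2) * dot ct x + (1 + γ / 2) * n := by
    have : dot c x ≤ ∑ i, ((1 + γ / 2) * (ct i * x i) + (1 + γ / 2)) := by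
      apply Finset.sum_le_sum
      intro i _
      have ha := hx.1 i
      have := mul_le_mul_of_nonneg_right (hge i) ha.1
      nlinarith
    rw [Finset.sum_add_distrib, ← Finset.mul_sum] at this
    simp only [Finset.sum_const, Finset.card_univ, Fintype.card_fin, nsmul_eq_mul] at this
    unfold dot at *
    linarith
  nlinarith

/-- let `P ⊆ [0,1]^n` be a nonempty compact convex down-monotone set touching
every facet `x_i = 1`, let `0 < ε ≤ 1/2` and `γ = ε/(1−ε)`. Then the polytope `Q` defined by
the box constraints together with all valid inequalities with coefficients in
`S = {0} ∪ {⌊(1+γ/2)^ℓ⌋ : 0 ≤ ℓ ≤ ⌊log_{1+γ/2}(5n/γ)⌋}` is an `ε`-approximated formulation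
of `P`: `P ⊆ Q` and `max {c·x : x ∈ P} ≥ (1−ε)·max {c·x : x ∈ Q}` for every `c`. -/
theorem down_monotone_approx_formulation (n : ℕ) (hn : 1 ≤ n)
    (P : Set (Fin n → ℝ)) (hPne : P.Nonempty) (hPc : IsCompact P) (hPconv : Convex ℝ P)
    (hPbox : ∀ x ∈ P, ∀ i, 0 ≤ x i ∧ x i ≤ 1)
    (hdm : ∀ x ∈ P, ∀ y : Fin n → ℝ, (∀ i, 0 ≤ y i ∧ y i ≤ x i) → y ∈ P)
    (hfull : ∀ i, ∃ x ∈ P, x i = 1)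
    (ε : ℝ) (hε0 : 0 < ε) (hε1 : ε ≤ 1 / 2) :
    P ⊆ approxQ n (ε / (1 - ε)) P ∧
    ∀ c : Fin n → ℝ,
      (1 - ε) * sSup ((fun x => dot c x) '' approxQ n (ε / (1 - ε)) P)
        ≤ sSup ((fun x => dot c x) '' P) := by
  have hd : 0 < 1 - ε := by linarith
  have h0 : 0 < ε / (1 - ε) := div_pos hε0 hd
  have h1 : ε / (1 - ε) ≤ 1 := by rw [div_le_one hd]; linarith
  have hg : 1 + ε / (1 - ε) = 1 / (1 - ε) := by field_simp; ring
  have hsub : P ⊆ approxQ n (ε / (1 - ε)) P := fun x hx =>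
    ⟨hPbox x hx, fun ct _ => le_csSup (bdd_aux ct P hPc) ⟨x, hx, rfl⟩⟩
  refine ⟨hsub, fun c => ?_⟩
  rw [mul_comm, ← le_div_iff₀ hd]
  apply csSup_le ((hPne.mono hsub).image _)
  rintro _ ⟨x, hx, rfl⟩
  set M := sSup ((fun x => dot c x) '' P) with hMdef
  have hM : ∀ y ∈ P, dot c y ≤ M := fun y hy => le_csSup (bdd_aux c P hPc) ⟨y, hy, rfl⟩
  have hdiv : M / (1 - ε) = (1 + ε / (1 - ε)) * M := by rw [hg]; ring
  rw [hdiv]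
  show dot c x ≤ _
  generalize ε / (1 - ε) = γ at *
  haveI : Nonempty (Fin n) := ⟨⟨0, hn⟩⟩
  obtain ⟨i₀, hi₀⟩ := Finite.exists_max c
  rcases le_or_gt (c i₀) 0 with hneg | hpos
  · have hM0 : 0 ≤ M := by
      obtain ⟨y, hy⟩ := hPne
      have := hM 0 (hdm y hy 0 fun i => ⟨le_rfl, (hPbox y hy i).1⟩)
      simpa [dot] using this
    have hx0 : dot c x ≤ 0 := Finset.sum_nonpos fun i _ =>
      mul_nonpos_of_nonpos_of_nonneg ((hi₀ i).trans hneg) (hx.1 i).1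
    have : 0 ≤ (1 + γ) * M := by positivity
    linarith
  · obtain ⟨L, hL, hL2⟩ := key_aux n hn γ h0 h1
    have hK : 0 < (1 + γ / 2) ^ L := by positivity
    obtain ⟨s, hs⟩ : ∃ s, s = (1 + γ / 2) ^ L / c i₀ := ⟨_, rfl⟩
    have hs0 : 0 < s := hs ▸ div_pos hK hpos
    have hsc : s * c i₀ = (1 + γ / 2) ^ L := by rw [hs]; field_simp
    have hmain := key_round hn P hPne hPbox hfull γ h0 L hL hL2 (fun i => s * max (c i) 0)
      (fun i => mul_nonneg hs0.le (le_max_right _ _))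
      (fun i => by
        rw [← hsc]
        exact mul_le_mul_of_nonneg_left (max_le (hi₀ i) hpos.le) hs0.le)
      i₀ (by simp only [max_eq_left hpos.le, hsc]) (s * M)
      (fun y hy => by
        have hy' := hM (fun i => if 0 ≤ c i then y i else 0) (hdm y hy _ fun i => by
          have := (hPbox y hy i).1
          split_ifs
          · exact ⟨this, le_rfl⟩
          · exact ⟨le_rfl, this⟩)
        refine le_trans (le_of_eq ?_) (mul_le_mul_of_nonneg_left hy' hs0.le)
        unfold dot
        rw [Finset.mul_sum]
        refine Finset.sum_congr rfl fun i _ => ?_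
        dsimp only
        split_ifs with h
        · rw [max_eq_left h]; ring
        · rw [max_eq_right (not_le.1 h).le]; ring)
      x hx
    have hle : s * dot c x ≤ dot (fun i => s * max (c i) 0) x := by
      unfold dot
      rw [Finset.mul_sum]
      refine Finset.sum_le_sum fun i _ => ?_
      rw [← mul_assoc]
      exact mul_le_mul_of_nonneg_right
        (mul_le_mul_of_nonneg_left (le_max_left _ _) hs0.le) (hx.1 i).1
    refine le_of_mul_le_mul_left ?_ hs0
    linarith
end
end

section
/- Let n ≥ 1 be an integer, let 0 < γ ≤ 1, let c ∈ ℝ^n be a nonzero vector with c ≥ 0, and let β be a real number with β ≥ ‖c‖_∞. Set K = ‖c‖_∞·γ/(5n), let G = {i : c_i < K}, define c̃ ∈ ℝ^n by c̃_i = 0 for i ∈ G and c̃_i = ⌊(1 + γ/2)^{⌊log_{1+γ/2}(c_i/K)⌋}⌋ for i ∉ G, and set β̃ = β/K. Then max{c·x : x ∈ [0,1]^n, c̃·x ≤ β̃} ≤ (1 + γ)·β. -/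
noncomputable section

/-- The threshold `K = ‖c‖_∞ · γ / (5n)` (the norm on `Fin n → ℝ` is the sup norm). -/
def Kthr (n : ℕ) (γ : ℝ) (c : Fin n → ℝ) : ℝ := ‖c‖ * γ / (5 * n)

/-- The rounded objective `c̃`: `c̃_i = 0` when `c_i < K`, and otherwise
`c̃_i = ⌊(1 + γ/2)^{⌊log_{1+γ/2}(c_i/K)⌋}⌋`. -/
def ctil (n : ℕ) (γ : ℝ) (c : Fin n → ℝ) : Fin n → ℝ :=
  fun i => if c i < Kthr n γ c then 0
    else ((⌊(1 + γ / 2) ^ (⌊Real.logb (1 + γ / 2) (c i / Kthr n γ c)⌋ : ℤ)⌋ : ℤ) : ℝ)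

/-- for `n ≥ 1`, `0 < γ ≤ 1`, a nonzero `c ≥ 0` and `β ≥ ‖c‖_∞`, with
`K = ‖c‖_∞·γ/(5n)`, `c̃` the rounded objective, and `β̃ = β/K`, one has
`max {c·x : x ∈ [0,1]^n, c̃·x ≤ β̃} ≤ (1 + γ)·β`. -/
theorem rounded_objective_approximation (n : ℕ) (hn : 1 ≤ n)
    (γ : ℝ) (hγ0 : 0 < γ) (hγ1 : γ ≤ 1)
    (c : Fin n → ℝ) (hc0 : ∀ i, 0 ≤ c i) (hcne : c ≠ 0)
    (β : ℝ) (hβ : ‖c‖ ≤ β) :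
    ∀ x : Fin n → ℝ, (∀ i, 0 ≤ x i ∧ x i ≤ 1) →
      dot (ctil n γ c) x ≤ β / Kthr n γ c →
      dot c x ≤ (1 + γ) * β := by
  intro x hx hd
  have hn' : (0 : ℝ) < n := by exact_mod_cast hn
  have hcpos : 0 < ‖c‖ := norm_pos_iff.mpr hcne
  have hK : 0 < Kthr n γ c := by unfold Kthr; positivity
  have hnK : (n : ℝ) * Kthr n γ c = ‖c‖ * γ / 5 := by
    unfold Kthr; field_simp
  have key : ∀ i, c i ≤ Kthr n γ c * (1 + γ / 2) * (ctil n γ c i + 1) := by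
    intro i
    unfold ctil
    split_ifs with h
    · nlinarith
    · have h1 : (1 : ℝ) < 1 + γ / 2 := by linarith
      have hq : 0 < c i / Kthr n γ c := div_pos (lt_of_lt_of_le hK (not_lt.mp h)) hK
      set k := ⌊Real.logb (1 + γ / 2) (c i / Kthr n γ c)⌋ with hk
      have h2 : Real.logb (1 + γ / 2) (c i / Kthr n γ c) < ((k + 1 : ℤ) : ℝ) := by
        push_cast; exact Int.lt_floor_add_one _
      have h3 := (Real.logb_lt_iff_lt_rpow h1 hq).mp h2
      rw [Real.rpow_intCast, zpow_add_one₀ (by linarith), div_lt_iff₀ hK] at h3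
      have h4 := Int.lt_floor_add_one ((1 + γ / 2) ^ k)
      have h5 : 0 < Kthr n γ c * (1 + γ / 2) := by positivity
      nlinarith [mul_lt_mul_of_pos_left h4 h5]
  have hsum : dot c x ≤ Kthr n γ c * (1 + γ / 2) * (dot (ctil n γ c) x + n) := by
    have e : Kthr n γ c * (1 + γ / 2) * (dot (ctil n γ c) x + n)
        = ∑ i : Fin n, Kthr n γ c * (1 + γ / 2) * (ctil n γ c i * x i + 1) := by
      rw [← Finset.mul_sum, Finset.sum_add_distrib]
      simp [dot]
    rw [e]
    unfold dot
    refine Finset.sum_le_sum fun i _ => ?_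
    have h5 : 0 < Kthr n γ c * (1 + γ / 2) := by positivity
    have := mul_le_mul_of_nonneg_right (key i) (hx i).1
    nlinarith [mul_le_mul_of_nonneg_left (hx i).2 h5.le]
  have hd' : dot (ctil n γ c) x * Kthr n γ c ≤ β := (le_div_iff₀ hK).mp hd
  have hb : 0 < β := lt_of_lt_of_le hcpos hβ
  have h6 : dot c x ≤ (1 + γ / 2) * (β + β * γ / 5) := by
    refine hsum.trans ?_
    have : Kthr n γ c * (1 + γ / 2) * (dot (ctil n γ c) x + n)
      = (1 + γ / 2) * (dot (ctil n γ c) x * Kthr n γ c + n * Kthr n γ c) := by ring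
    rw [this, hnK]
    gcongr
  have h7 : β * γ * γ ≤ β * γ * 1 := by gcongr
  have h8 : 0 < β * γ := by positivity
  nlinarith
end
end

section
/- Let n ≥ 1 be an integer, let 0 < γ ≤ 1, let c ∈ ℝ^n be a nonzero vector with c ≥ 0, and set K = ‖c‖_∞·γ/(5n), G = {i : c_i < K}, c̃_i = 0 for i ∈ G and c̃_i = ⌊(1 + γ/2)^{⌊log_{1+γ/2}(c_i/K)⌋}⌋ for i ∉ G. Then: (1) every coordinate c̃_i belongs to the set S = {0} ∪ {⌊(1 + γ/2)^ℓ⌋ : ℓ = 0, 1, …, ⌊log_{1+γ/2}(5n/γ)⌋}; and (2) for every x ∈ ℝ^n with x ≥ 0 and c·x ≤ β, one has c̃·x ≤ β/K. -/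
noncomputable section

/-- for `n ≥ 1`, `0 < γ ≤ 1` and a nonzero `c ≥ 0`, (1) every coordinate of the
rounded objective `c̃` belongs to the coefficient set `S`, and (2) for every `β` and every
`x ≥ 0` with `c·x ≤ β`, one has `c̃·x ≤ β/K` where `K = ‖c‖_∞·γ/(5n)`. -/
theorem rounded_objective_valid (n : ℕ) (hn : 1 ≤ n)
    (γ : ℝ) (hγ0 : 0 < γ) (hγ1 : γ ≤ 1)
    (c : Fin n → ℝ) (hc0 : ∀ i, 0 ≤ c i) (hcne : c ≠ 0) :
    (∀ i, ctil n γ c i ∈ coefSet n γ) ∧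
    ∀ (β : ℝ) (x : Fin n → ℝ), (∀ i, 0 ≤ x i) → dot c x ≤ β →
      dot (ctil n γ c) x ≤ β / Kthr n γ c := by
  have hn' : (0:ℝ) < n := by exact_mod_cast hn
  have hcn : 0 < ‖c‖ := norm_pos_iff.mpr hcne
  have hK : 0 < Kthr n γ c := by unfold Kthr; positivity
  have hb : 1 < 1 + γ / 2 := by linarith
  have hb0 : 0 < 1 + γ / 2 := by linarith
  constructor
  · intro i
    unfold ctil coefSet
    split_ifs with h
    · exact Set.mem_insert _ _
    · right
      rw [not_lt] at h
      have h1 : 1 ≤ c i / Kthr n γ c := (one_le_div hK).mpr h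
      have h2 : c i / Kthr n γ c ≤ 5 * n / γ := by
        have h3 : c i ≤ ‖c‖ := (le_abs_self _).trans (norm_le_pi_norm c i)
        rw [div_le_iff₀ hK]
        have h4 : 5 * (n:ℝ) / γ * Kthr n γ c = ‖c‖ := by
          unfold Kthr; field_simp
        rw [h4]; exact h3
      have h5 : 0 ≤ Real.logb (1 + γ / 2) (c i / Kthr n γ c) := Real.logb_nonneg hb h1
      have h6 : Real.logb (1 + γ / 2) (c i / Kthr n γ c)
          ≤ Real.logb (1 + γ / 2) (5 * n / γ) :=
        Real.logb_le_logb_of_le hb (by linarith) h2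
      refine ⟨⌊Real.logb (1 + γ / 2) (c i / Kthr n γ c)⌋₊, Nat.floor_mono h6, ?_⟩
      rw [← Int.natCast_floor_eq_floor h5, zpow_natCast]
  · intro β x hx hβ
    have key : ∀ i, ctil n γ c i ≤ c i / Kthr n γ c := by
      intro i
      unfold ctil
      split_ifs with h
      · exact div_nonneg (hc0 i) hK.le
      · rw [not_lt] at h
        have hp : 0 < c i / Kthr n γ c := div_pos (hK.trans_le h) hK
        refine (Int.floor_le _).trans ?_
        rw [← Real.rpow_intCast]
        calc (1 + γ / 2) ^ ((⌊Real.logb (1 + γ / 2) (c i / Kthr n γ c)⌋ : ℤ) : ℝ)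
            ≤ (1 + γ / 2) ^ (Real.logb (1 + γ / 2) (c i / Kthr n γ c)) :=
              Real.rpow_le_rpow_of_exponent_le hb.le (Int.floor_le _)
          _ = _ := Real.rpow_logb hb0 hb.ne' hp
    calc dot (ctil n γ c) x ≤ ∑ i, c i / Kthr n γ c * x i :=
          Finset.sum_le_sum fun i _ => mul_le_mul_of_nonneg_right (key i) (hx i)
      _ = dot c x / Kthr n γ c := by
          unfold dot
          rw [Finset.sum_div]
          exact Finset.sum_congr rfl fun i _ => by ring
      _ ≤ β / Kthr n γ c := div_le_div_of_nonneg_right hβ hK.le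
end
end
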